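/- Assume (H1): the completely positive map L admits a unique invariant state ρ_∞. Then for every l ∈ ℝ^d, the equation L_l - L^*(L_l) = Σ_{i=1}^{2d} (e_i·l) A_i^* A_i - (m·l) I admits a solution L_l among k×k complex matrices, where L^*(X) = Σ_{i=1}^{2d} A_i^* X A_i is the adjoint map and m = Σ_{i=1}^{2d} Tr(A_i ρ_∞ A_i^*) e_i ∈ ℝ^d. -/

import Mathlib

open MeasureTheory Filter Matrix Finset
open scoped ComplexOrder

noncomputable section

/-- The direction vectors `e_1, …, e_{2d}` in `ℤ^d`, with `e_{d+j} = -e_j`. -/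
def dir (d : ℕ) (i : Fin (2 * d)) : Fin d → ℤ :=
  fun j => if (i : ℕ) < d then (if (j : ℕ) = (i : ℕ) then 1 else 0)
           else (if (j : ℕ) = (i : ℕ) - d then -1 else 0)

/-- The direction vectors viewed in `ℝ^d`. -/
def dirR (d : ℕ) (i : Fin (2 * d)) : Fin d → ℝ := fun j => (dir d i j : ℝ)

instance {k : ℕ} : MeasurableSpace (Matrix (Fin k) (Fin k) ℂ) := MeasurableSpace.pi

/-- A density matrix: positive semidefinite with trace one. -/
def IsDensity {k : ℕ} (ρ : Matrix (Fin k) (Fin k) ℂ) : Prop := ρ.PosSemidef ∧ ρ.trace = 1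

/-- The quantum trajectory process of the open quantum random walk. -/
structure IsQTraj {k d : ℕ} {Ω : Type} {mΩ : MeasurableSpace Ω}
    (A : Fin (2 * d) → Matrix (Fin k) (Fin k) ℂ)
    (μ : Measure Ω) (ℱ : Filtration ℕ mΩ)
    (ρ : ℕ → Ω → Matrix (Fin k) (Fin k) ℂ)
    (X : ℕ → Ω → Fin d → ℤ) : Prop where
  density : ∀ n, ∀ᵐ ω ∂μ, IsDensity (ρ n ω)
  adapted_ρ : ∀ n, Measurable[ℱ n] (ρ n)
  adapted_X : ∀ n, Measurable[ℱ n] (X n)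
  prob : ∀ (n : ℕ) (j : Fin (2 * d)),
    μ[(fun ω => if X (n + 1) ω = X n ω + dir d j then (1 : ℝ) else 0) | ℱ n]
      =ᵐ[μ] fun ω => ((A j * ρ n ω * (A j)ᴴ).trace).re
  update : ∀ (n : ℕ) (j : Fin (2 * d)), ∀ᵐ ω ∂μ,
    X (n + 1) ω = X n ω + dir d j →
      ρ (n + 1) ω = ((A j * ρ n ω * (A j)ᴴ).trace)⁻¹ • (A j * ρ n ω * (A j)ᴴ)

/-- The drift vector `m = Σ_{i=1}^{2d} Tr(A_i ρ_∞ A_i^*) e_i ∈ ℝ^d`. -/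
def mvec {k d : ℕ} (A : Fin (2 * d) → Matrix (Fin k) (Fin k) ℂ)
    (ρinf : Matrix (Fin k) (Fin k) ℂ) : Fin d → ℝ :=
  fun j => ∑ i, ((A i * ρinf * (A i)ᴴ).trace).re * dirR d i j

/-!
Writing `⟨X, Y⟩ = tr (X Y)`, the range of `1 - L*` consists of the matrices annihilated by every
fixed point of `L`, so it suffices to show that the fixed points of `L` are the multiples of `ρ_∞`.
Since `L` commutes with `*`, the real and imaginary parts of a fixed point are fixed. If `X = X*` is
fixed then `X = L(X⁺) - L(X⁻)`, and `tr L(X⁺) = tr X⁺`; as the Jordan decomposition is the only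
difference of positive matrices in which the first has trace `tr X⁺`, both `X⁺` and `X⁻` are fixed.
By uniqueness of the invariant state they are multiples of `ρ_∞`.
-/

open scoped MatrixOrder

section JordanDecomposition

variable {n 𝕜 : Type*} [Fintype n] [RCLike 𝕜] {M N : Matrix n n 𝕜}

lemma trace_mul_nonneg (hM : 0 ≤ M) (hN : 0 ≤ N) : 0 ≤ (M * N).trace := by
  classical
  obtain ⟨B, rfl⟩ := CStarAlgebra.nonneg_iff_eq_star_mul_self.mp hN
  rw [← Matrix.mul_assoc, trace_mul_comm, ← Matrix.mul_assoc]
  exact (hM.posSemidef.mul_mul_conjTranspose_same B).trace_nonneg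

lemma mul_eq_zero_of_trace_mul_eq_zero (hM : 0 ≤ M) (hN : 0 ≤ N) (h : (M * N).trace = 0) :
    M * N = 0 := by
  classical
  obtain ⟨B, rfl⟩ := CStarAlgebra.nonneg_iff_eq_star_mul_self.mp hM
  obtain ⟨C, rfl⟩ := CStarAlgebra.nonneg_iff_eq_mul_star_self.mp hN
  have hBC : B * C = 0 := by
    rw [← trace_conjTranspose_mul_self_eq_zero_iff, ← h, conjTranspose_mul, Matrix.mul_assoc,
      trace_mul_comm]
    simp only [star_eq_conjTranspose, Matrix.mul_assoc]
  rw [Matrix.mul_assoc, ← Matrix.mul_assoc B, hBC, Matrix.zero_mul, Matrix.mul_zero]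

variable [DecidableEq n]

lemma exists_mul_eq_posPart {X : Matrix n n 𝕜} (hX : IsSelfAdjoint X) :
    ∃ E : Matrix n n 𝕜, 0 ≤ E ∧ E ≤ 1 ∧ X * E = X⁺ := by
  have hcont (f : ℝ → ℝ) : ContinuousOn f (spectrum ℝ X) := X.finite_real_spectrum.continuousOn f
  let e : ℝ → ℝ := (Set.Ioi 0).indicator 1
  refine ⟨cfc e X, cfc_nonneg fun x _ => Set.indicator_nonneg (by simp) x,
    cfc_le_one _ _ fun x _ => Set.indicator_le_self' (by simp) x, ?_⟩
  calc X * cfc e X = cfc (fun x => x * e x) X := by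
        rw [cfc_mul (fun x => x) e X (hcont _) (hcont _), cfc_id' ℝ X]
    _ = cfc (·⁺ : ℝ → ℝ) X := by
        congr 1 with x
        rcases lt_or_ge 0 x with hx | hx
        · simp [e, hx, hx.le]
        · simp [e, hx]
    _ = X⁺ := by rw [CFC.posPart_def, cfcₙ_eq_cfc]

lemma eq_posPart_sub_of_trace_le (hM : 0 ≤ M) (hN : 0 ≤ N)
    (h : M.trace ≤ ((M - N)⁺).trace) : M = (M - N)⁺ := by
  obtain ⟨E, hE₀, hE₁, hE⟩ := exists_mul_eq_posPart
    ((IsSelfAdjoint.of_nonneg hM).sub (IsSelfAdjoint.of_nonneg hN))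
  have hME : 0 ≤ (M * (1 - E)).trace := trace_mul_nonneg hM (sub_nonneg.mpr hE₁)
  have hNE : 0 ≤ (N * E).trace := trace_mul_nonneg hN hE₀
  have hsum : (M * (1 - E)).trace + (N * E).trace ≤ 0 := by
    rw [← hE, ← sub_nonpos] at h
    convert h using 1
    simp only [Matrix.mul_sub, Matrix.sub_mul, Matrix.mul_one, trace_sub]
    ring
  obtain ⟨hME', hNE'⟩ := (add_eq_zero_iff_of_nonneg hME hNE).mp (hsum.antisymm (add_nonneg hME hNE))
  have hM_eq : M = M * E := by
    simpa [Matrix.mul_sub, sub_eq_zero] using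
      mul_eq_zero_of_trace_mul_eq_zero hM (sub_nonneg.mpr hE₁) hME'
  have hN_eq : N * E = 0 := mul_eq_zero_of_trace_mul_eq_zero hN hE₀ hNE'
  rw [← hE, Matrix.sub_mul, hN_eq, sub_zero, ← hM_eq]

variable {Φ : Matrix n n 𝕜 →ₚ[𝕜] Matrix n n 𝕜} {X : Matrix n n 𝕜}

lemma map_posPart_of_map_eq_self (htr : ∀ Y, (Φ Y).trace = Y.trace) (hX : IsSelfAdjoint X)
    (hfix : Φ X = X) : Φ X⁺ = X⁺ := by
  have hsub : Φ X⁺ - Φ X⁻ = X := by rw [← map_sub, CFC.posPart_sub_negPart X hX, hfix]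
  have h := eq_posPart_sub_of_trace_le (map_nonneg Φ (CFC.posPart_nonneg X))
    (map_nonneg Φ (CFC.negPart_nonneg X)) (by rw [hsub, htr])
  rwa [hsub] at h

lemma map_negPart_of_map_eq_self (htr : ∀ Y, (Φ Y).trace = Y.trace) (hX : IsSelfAdjoint X)
    (hfix : Φ X = X) : Φ X⁻ = X⁻ := by
  rw [← CFC.posPart_neg]
  exact map_posPart_of_map_eq_self htr hX.neg (by rw [map_neg, hfix])

end JordanDecomposition

section UniqueInvariantState

variable {n : Type*} [Fintype n] {Φ : Matrix n n ℂ →ₚ[ℂ] Matrix n n ℂ} {ρ X : Matrix n n ℂ}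

lemma eq_trace_smul_of_nonneg_of_map_eq_self
    (huniq : ∀ σ, 0 ≤ σ → σ.trace = 1 → Φ σ = σ → σ = ρ) (hX : 0 ≤ X) (hfix : Φ X = X) :
    X = X.trace • ρ := by
  by_cases h0 : X.trace = 0
  · rw [h0, zero_smul, ← hX.posSemidef.trace_eq_zero_iff, h0]
  · have hρ : X.trace⁻¹ • X = ρ := by
      refine huniq _ ?_ ?_ ?_
      · exact (hX.posSemidef.smul (inv_nonneg.mpr hX.posSemidef.trace_nonneg)).nonneg
      · rw [trace_smul, smul_eq_mul, inv_mul_cancel₀ h0]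
      · rw [map_smul, hfix]
    rw [← hρ, smul_inv_smul₀ h0]

lemma eq_trace_smul_of_isSelfAdjoint_of_map_eq_self (htr : ∀ Y, (Φ Y).trace = Y.trace)
    (huniq : ∀ σ, 0 ≤ σ → σ.trace = 1 → Φ σ = σ → σ = ρ) (hX : IsSelfAdjoint X)
    (hfix : Φ X = X) : X = X.trace • ρ := by
  classical
  have hpos := eq_trace_smul_of_nonneg_of_map_eq_self huniq (CFC.posPart_nonneg X)
    (map_posPart_of_map_eq_self htr hX hfix)
  have hneg := eq_trace_smul_of_nonneg_of_map_eq_self huniq (CFC.negPart_nonneg X)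
    (map_negPart_of_map_eq_self htr hX hfix)
  rw [← CFC.posPart_sub_negPart X hX, trace_sub, sub_smul, ← hpos, ← hneg]

lemma eq_trace_smul_of_map_eq_self (htr : ∀ Y, (Φ Y).trace = Y.trace)
    (huniq : ∀ σ, 0 ≤ σ → σ.trace = 1 → Φ σ = σ → σ = ρ) (hfix : Φ X = X) :
    X = X.trace • ρ := by
  classical
  have hstar : Φ (star X) = star X := by rw [map_star, hfix]
  have hre := eq_trace_smul_of_isSelfAdjoint_of_map_eq_self htr huniq (realPart X).2 (by
    rw [realPart_apply_coe, ← Complex.coe_smul, map_smul, map_add, hfix, hstar])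
  have him := eq_trace_smul_of_isSelfAdjoint_of_map_eq_self htr huniq (imaginaryPart X).2 (by
    rw [imaginaryPart_apply_coe, map_smul, ← Complex.coe_smul, map_smul, map_sub, hfix, hstar])
  rw [← realPart_add_I_smul_imaginaryPart X, trace_add, trace_smul, add_smul, smul_assoc,
    ← hre, ← him]

end UniqueInvariantState

section TraceDuality

variable {n K : Type*} [Fintype n] [Field K]

lemma exists_forall_eq_trace_mul (f : Module.Dual K (Matrix n n K)) :
    ∃ X : Matrix n n K, ∀ Y, f Y = (X * Y).trace := by
  let pairing : Matrix n n K →ₗ[K] Module.Dual K (Matrix n n K) :=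
    (LinearMap.mul K (Matrix n n K)).compr₂ (traceLinearMap n K K)
  have hinj : Function.Injective pairing := fun _ _ h =>
    ext_iff_trace_mul_right.mpr (LinearMap.congr_fun h)
  obtain ⟨X, hX⟩ := (LinearMap.injective_iff_surjective_of_finrank_eq_finrank
    Subspace.dual_finrank_eq.symm).mp hinj f
  exact ⟨X, fun Y => (LinearMap.congr_fun hX Y).symm⟩

lemma mem_range_of_forall_mem_ker_trace_mul_eq_zero {S T : Module.End K (Matrix n n K)}
    (hadj : ∀ X Y, (T X * Y).trace = (X * S Y).trace) {R : Matrix n n K}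
    (hR : ∀ X ∈ LinearMap.ker T, (X * R).trace = 0) : R ∈ LinearMap.range S := by
  by_contra hRS
  obtain ⟨f, hfR, hfS⟩ := Submodule.exists_le_ker_of_notMem hRS
  obtain ⟨X, hX⟩ := exists_forall_eq_trace_mul f
  refine hfR ((hX R).trans (hR X ?_))
  rw [LinearMap.mem_ker, ext_iff_trace_mul_right]
  intro Y
  rw [hadj, ← hX, Matrix.zero_mul, trace_zero]
  exact hfS (LinearMap.mem_range_self S Y)

end TraceDuality

theorem stmt4_general {n : Type*} [Fintype n] [DecidableEq n]
    (Φ : Matrix n n ℂ →ₚ[ℂ] Matrix n n ℂ) (Ψ : Module.End ℂ (Matrix n n ℂ))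
    (hadj : ∀ X Y, (Φ X * Y).trace = (X * Ψ Y).trace) (htr : ∀ X, (Φ X).trace = X.trace)
    {ρ : Matrix n n ℂ} (hρ : ρ.trace = 1)
    (huniq : ∀ σ, 0 ≤ σ → σ.trace = 1 → Φ σ = σ → σ = ρ) (R : Matrix n n ℂ) :
    ∃ Y, Y - Ψ Y = R - (ρ * R).trace • (1 : Matrix n n ℂ) := by
  refine mem_range_of_forall_mem_ker_trace_mul_eq_zero (S := .id - Ψ)
    (T := .id - Φ.toLinearMap) (fun X Y => ?_) fun X hX => ?_
  · simp [Matrix.mul_sub, Matrix.sub_mul, hadj]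
  · have hfix : Φ X = X := (sub_eq_zero.mp hX).symm
    rw [eq_trace_smul_of_map_eq_self htr huniq hfix]
    simp [Matrix.mul_sub, hρ]

section Kraus

variable {n ι : Type*} [Fintype n] [Fintype ι] (A : ι → Matrix n n ℂ)

/-- The completely positive map `X ↦ ∑ i, A i * X * (A i)ᴴ` with Kraus operators `A i`; the paper's
`L` is `krausMap A`, and its adjoint `L*` is the Kraus map of the family `(A i)ᴴ`. -/
def krausMap : Matrix n n ℂ →ₚ[ℂ] Matrix n n ℂ :=
  .mk₀
    { toFun := fun X => ∑ i, A i * X * (A i)ᴴ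
      map_add' := fun X Y => by simp only [Matrix.mul_add, Matrix.add_mul, sum_add_distrib]
      map_smul' := fun c X => by simp only [Matrix.mul_smul, Matrix.smul_mul, smul_sum,
        RingHom.id_apply] }
    fun _ hX => (posSemidef_sum _ fun i _ =>
      hX.posSemidef.mul_mul_conjTranspose_same (A i)).nonneg

lemma krausMap_apply (X : Matrix n n ℂ) : krausMap A X = ∑ i, A i * X * (A i)ᴴ := rfl

lemma krausMap_conjTranspose_apply (X : Matrix n n ℂ) :
    krausMap (fun i => (A i)ᴴ) X = ∑ i, (A i)ᴴ * X * A i := by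
  simp only [krausMap_apply, conjTranspose_conjTranspose]

lemma trace_krausMap_mul (X Y : Matrix n n ℂ) :
    (krausMap A X * Y).trace = (X * krausMap (fun i => (A i)ᴴ) Y).trace := by
  rw [krausMap_apply, krausMap_conjTranspose_apply, sum_mul, mul_sum, trace_sum, trace_sum]
  refine sum_congr rfl fun i _ => ?_
  rw [Matrix.mul_assoc, Matrix.mul_assoc, trace_mul_comm]
  simp only [Matrix.mul_assoc]

lemma trace_krausMap [DecidableEq n] (hA : ∑ i, (A i)ᴴ * A i = 1) (X : Matrix n n ℂ) :
    (krausMap A X).trace = X.trace := by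
  simpa [krausMap_conjTranspose_apply, hA] using trace_krausMap_mul A X 1

end Kraus

lemma ofReal_re_trace {n : Type*} [Fintype n] {M : Matrix n n ℂ} (hM : M.IsHermitian) :
    (M.trace.re : ℂ) = M.trace := by
  rw [← Complex.conj_eq_iff_re, starRingEnd_apply, ← trace_conjTranspose, hM]

lemma trace_mul_sum_dirR_smul {k d : ℕ} (A : Fin (2 * d) → Matrix (Fin k) (Fin k) ℂ)
    {ρ : Matrix (Fin k) (Fin k) ℂ} (hρ : ρ.IsHermitian) (l : Fin d → ℝ) :
    (ρ * ∑ i, (∑ j, dirR d i j * l j) • ((A i)ᴴ * A i)).trace =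
      ((∑ j, mvec A ρ j * l j : ℝ) : ℂ) := by
  have hprob (i) : (ρ * ((A i)ᴴ * A i)).trace = ((A i * ρ * (A i)ᴴ).trace.re : ℂ) := by
    rw [ofReal_re_trace (isHermitian_mul_mul_conjTranspose (A i) hρ), Matrix.mul_assoc,
      trace_mul_comm (A i), Matrix.mul_assoc]
  have hdrift : ∑ j, mvec A ρ j * l j =
      ∑ i, (∑ j, dirR d i j * l j) * (A i * ρ * (A i)ᴴ).trace.re := by
    simp only [mvec, sum_mul]
    rw [sum_comm]
    exact sum_congr rfl fun i _ => sum_congr rfl fun j _ => by ring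
  simp only [hdrift, mul_sum, trace_sum, Matrix.mul_smul, trace_smul, hprob, Complex.real_smul,
    Complex.ofReal_sum, Complex.ofReal_mul]

/-- Under (H1) (unique invariant state `ρ_∞` of `L`), for every `l ∈ ℝ^d`
the equation `L_l - L^*(L_l) = Σ_i (e_i·l) A_i^* A_i - (m·l) I` admits a solution. -/
theorem stmt4 {k d : ℕ} (hd : 1 ≤ d)
    (A : Fin (2 * d) → Matrix (Fin k) (Fin k) ℂ)
    (hA : ∑ j, (A j)ᴴ * A j = 1)
    (ρinf : Matrix (Fin k) (Fin k) ℂ) (hρinf : IsDensity ρinf)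
    (hinv : (∑ j, A j * ρinf * (A j)ᴴ) = ρinf)
    (huniq : ∀ σ, IsDensity σ → (∑ j, A j * σ * (A j)ᴴ) = σ → σ = ρinf)
    (l : Fin d → ℝ) :
    ∃ Ll : Matrix (Fin k) (Fin k) ℂ,
      Ll - (∑ i, (A i)ᴴ * Ll * A i) =
        (∑ i, (∑ j, dirR d i j * l j) • ((A i)ᴴ * A i)) -
          (∑ j, mvec A ρinf j * l j) • (1 : Matrix (Fin k) (Fin k) ℂ) := by
  obtain ⟨Y, hY⟩ := stmt4_general (krausMap A) (krausMap fun i => (A i)ᴴ).toLinearMap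
    (trace_krausMap_mul A) (trace_krausMap A hA) hρinf.2
    (fun σ hσ htr => huniq σ ⟨hσ.posSemidef, htr⟩)
    (∑ i, (∑ j, dirR d i j * l j) • ((A i)ᴴ * A i))
  rw [trace_mul_sum_dirR_smul A hρinf.1.isHermitian, Complex.coe_smul] at hY
  exact ⟨Y, by rw [← krausMap_conjTranspose_apply]; exact hY⟩
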